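/- If a and b are terms of Λ of the same type and a = b is not provable in Λ, then for every two terms c and d of the same type one can construct type-instances a′ of a and b′ of b, terms h₁, …, hₙ (n ≥ 0), and find variables x₁, …, x_m (m ≥ 0), such that (λx₁…x_m.a′)h₁…hₙ = c and (λx₁…x_m.b′)h₁…hₙ = d are both provable in Λ. -/

import Mathlib

set_option autoImplicit false

/-- Simple types over a set `ν` of atomic types. -/
inductive Ty (ν : Type) : Type
  | atom : ν → Ty ν
  | arrow : Ty ν → Ty ν → Ty ν

/-- A typing context: the (types of the) free variables. -/
abbrev Ctx (ν : Type) : Type := List (Ty ν)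

/-- Typed de Bruijn variables. -/
inductive Var {ν : Type} : Ctx ν → Ty ν → Type
  | vz {Γ : Ctx ν} {A : Ty ν} : Var (A :: Γ) A
  | vs {Γ : Ctx ν} {A B : Ty ν} : Var Γ A → Var (B :: Γ) A

/-- Typed terms of the simply typed lambda calculus Λ. -/
inductive Tm {ν : Type} : Ctx ν → Ty ν → Type
  | var {Γ : Ctx ν} {A : Ty ν} : Var Γ A → Tm Γ A
  | app {Γ : Ctx ν} {A B : Ty ν} : Tm Γ (Ty.arrow A B) → Tm Γ A → Tm Γ B
  | lam {Γ : Ctx ν} {A B : Ty ν} : Tm (A :: Γ) B → Tm Γ (Ty.arrow A B)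

/-- Renamings between contexts. -/
def Ren {ν : Type} (Γ Δ : Ctx ν) : Type := ∀ A : Ty ν, Var Γ A → Var Δ A

def Ren.ext {ν : Type} {Γ Δ : Ctx ν} (ρ : Ren Γ Δ) (A : Ty ν) : Ren (A :: Γ) (A :: Δ) :=
  fun _ v => match v with
  | .vz => .vz
  | .vs w => .vs (ρ _ w)

def Tm.rename {ν : Type} : ∀ {Γ Δ : Ctx ν} {A : Ty ν}, Ren Γ Δ → Tm Γ A → Tm Δ A
  | _, _, _, ρ, .var v => .var (ρ _ v)
  | _, _, _, ρ, .app f a => .app (f.rename ρ) (a.rename ρ)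
  | _, _, _, ρ, .lam b => .lam (b.rename (ρ.ext _))

/-- Simultaneous substitutions. -/
def Subst {ν : Type} (Γ Δ : Ctx ν) : Type := ∀ A : Ty ν, Var Γ A → Tm Δ A

def Subst.ext {ν : Type} {Γ Δ : Ctx ν} (σ : Subst Γ Δ) (A : Ty ν) :
    ∀ B : Ty ν, Var (A :: Γ) B → Tm (A :: Δ) B
  | _, .vz => .var .vz
  | _, .vs w => (σ _ w).rename (fun _ => Var.vs)

def Tm.subst {ν : Type} : ∀ {Γ Δ : Ctx ν} {A : Ty ν}, Subst Γ Δ → Tm Γ A → Tm Δ A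
  | _, _, _, σ, .var v => σ _ v
  | _, _, _, σ, .app f a => .app (f.subst σ) (a.subst σ)
  | _, _, _, σ, .lam b => .lam (b.subst (Subst.ext σ _))

/-- Extending a substitution with a term for the last variable. -/
def Subst.cons {ν : Type} {Γ Δ : Ctx ν} {A : Ty ν} (b : Tm Δ A) (σ : Subst Γ Δ) :
    ∀ B : Ty ν, Var (A :: Γ) B → Tm Δ B
  | _, .vz => b
  | _, .vs w => σ _ w

/-- Substitution of a single term for the last variable: `a[b/x]`. -/
def Tm.subst1 {ν : Type} {Γ : Ctx ν} {A B : Ty ν} (a : Tm (A :: Γ) B) (b : Tm Γ A) : Tm Γ B :=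
  a.subst (Subst.cons b (fun _ v => .var v))

/-- The theory Λ of βη-equality. -/
inductive Eqv {ν : Type} : ∀ {Γ : Ctx ν} {A : Ty ν}, Tm Γ A → Tm Γ A → Prop
  | refl {Γ : Ctx ν} {A : Ty ν} (a : Tm Γ A) : Eqv a a
  | symm {Γ : Ctx ν} {A : Ty ν} {a b : Tm Γ A} : Eqv a b → Eqv b a
  | trans {Γ : Ctx ν} {A : Ty ν} {a b c : Tm Γ A} : Eqv a b → Eqv b c → Eqv a c
  | congApp {Γ : Ctx ν} {A B : Ty ν} {f g : Tm Γ (Ty.arrow A B)} {a b : Tm Γ A} :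
      Eqv f g → Eqv a b → Eqv (.app f a) (.app g b)
  | congLam {Γ : Ctx ν} {A B : Ty ν} {a b : Tm (A :: Γ) B} :
      Eqv a b → Eqv (.lam a) (.lam b)
  | beta {Γ : Ctx ν} {A B : Ty ν} (a : Tm (A :: Γ) B) (b : Tm Γ A) :
      Eqv (.app (.lam a) b) (a.subst1 b)
  | eta {Γ : Ctx ν} {A B : Ty ν} (a : Tm Γ (Ty.arrow A B)) :
      Eqv (.lam (.app (a.rename (fun _ => Var.vs)) (.var .vz))) a

/-- Substitution of types for the atomic types, on types. -/
def Ty.substA {ν : Type} (σ : ν → Ty ν) : Ty ν → Ty ν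
  | .atom v => σ v
  | .arrow A B => .arrow (A.substA σ) (B.substA σ)

def Var.substA {ν : Type} (σ : ν → Ty ν) :
    ∀ {Γ : Ctx ν} {A : Ty ν}, Var Γ A → Var (Γ.map (Ty.substA σ)) (A.substA σ)
  | _, _, .vz => .vz
  | _, _, .vs v => .vs (v.substA σ)

/-- Substitution of types for the atomic types, on terms: type-instances. -/
def Tm.substA {ν : Type} (σ : ν → Ty ν) :
    ∀ {Γ : Ctx ν} {A : Ty ν}, Tm Γ A → Tm (Γ.map (Ty.substA σ)) (A.substA σ)
  | _, _, .var v => .var (v.substA σ)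
  | _, _, .app f a => .app (f.substA σ) (a.substA σ)
  | _, _, .lam b => .lam (b.substA σ)

/-- `Ty.arrs [A₁, …, Aₘ] B = Aₘ → (… → (A₁ → B))` : the type of `λx₁…xₘ.a`. -/
def Ty.arrs {ν : Type} : Ctx ν → Ty ν → Ty ν
  | [], B => B
  | A :: Γ, B => Ty.arrs Γ (Ty.arrow A B)

/-- λ-abstracting all the free variables of a term. -/
def Tm.lamAll {ν : Type} : ∀ {Γ : Ctx ν} {A : Ty ν}, Tm Γ A → Tm [] (Ty.arrs Γ A)
  | [], _, a => a
  | _ :: Γ, _, a => Tm.lamAll (Γ := Γ) (Tm.lam a)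

/-- `Ty.arrsR [B₁, …, Bₙ] C = B₁ → (… → (Bₙ → C))`. -/
def Ty.arrsR {ν : Type} : List (Ty ν) → Ty ν → Ty ν
  | [], C => C
  | B :: Bs, C => Ty.arrow B (Ty.arrsR Bs C)

/-- A list of terms `h₁ : B₁, …, hₙ : Bₙ` in context `Δ`. -/
inductive HList {ν : Type} (Δ : Ctx ν) : List (Ty ν) → Type
  | nil : HList Δ []
  | cons {B : Ty ν} {Bs : List (Ty ν)} : Tm Δ B → HList Δ Bs → HList Δ (B :: Bs)

/-- Iterated application `t h₁ … hₙ`. -/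
def HList.apps {ν : Type} {Δ : Ctx ν} :
    ∀ {Bs : List (Ty ν)} {C : Ty ν}, HList Δ Bs → Tm Δ (Ty.arrsR Bs C) → Tm Δ C
  | _, _, .nil, t => t
  | _, _, .cons h hs, t => HList.apps hs (t.app h)

/-- Iterated application `t h₁ … hₙ`. -/
def Tm.apps {ν : Type} {Δ : Ctx ν} {Bs : List (Ty ν)} {C : Ty ν}
    (t : Tm Δ (Ty.arrsR Bs C)) (hs : HList Δ Bs) : Tm Δ C :=
  hs.apps t

/-- Weakening of a closed term into an arbitrary context. -/
def Var.elim0 {ν : Type} {A : Ty ν} {C : Sort*} : Var ([] : Ctx ν) A → C :=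
  fun v => nomatch v

def Tm.wk {ν : Type} {Δ : Ctx ν} {A : Ty ν} (t : Tm ([] : Ctx ν) A) : Tm Δ A :=
  t.rename (fun _ v => v.elim0)

namespace Boehm

/-! ### Substitution calculus -/

theorem ren_ext_comp {ν : Type} {Γ Δ Θ : Ctx ν} (ρ : Ren Γ Δ) (ρ' : Ren Δ Θ) (A : Ty ν) :
    (fun B v => (ρ'.ext A) B (ρ.ext A B v)) = Ren.ext (fun B v => ρ' B (ρ B v)) A := by
  funext B v; cases v <;> rfl

theorem rename_rename {ν : Type} {Γ : Ctx ν} {A : Ty ν} (t : Tm Γ A) :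
    ∀ {Δ Θ : Ctx ν} (ρ : Ren Γ Δ) (ρ' : Ren Δ Θ),
      (t.rename ρ).rename ρ' = t.rename (fun B v => ρ' B (ρ B v)) := by
  induction t with
  | var v => intros; rfl
  | app f a ihf iha => intros; simp only [Tm.rename, ihf, iha]
  | lam b ih => intro _ _ ρ ρ'; simp only [Tm.rename, ih]; erw [ren_ext_comp]

theorem rename_id {ν : Type} {Γ : Ctx ν} {A : Ty ν} (t : Tm Γ A) :
    t.rename (fun _ v => v) = t := by
  induction t with
  | var v => rfl
  | app f a ihf iha => simp only [Tm.rename, ihf, iha]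
  | @lam Γ A B b ih =>
    simp only [Tm.rename]
    have : Ren.ext (fun (_ : Ty ν) (v : Var Γ _) => v) A = fun _ v => v := by
      funext B v; cases v <;> rfl
    rw [this, ih]

theorem subst_ext_ren {ν : Type} {Γ Δ Θ : Ctx ν} (ρ : Ren Γ Δ) (σ : Subst Δ Θ) (A : Ty ν) :
    (fun B v => Subst.ext σ A B (ρ.ext A B v)) = Subst.ext (fun B v => σ B (ρ B v)) A := by
  funext B v; cases v <;> rfl

theorem rename_subst {ν : Type} {Γ : Ctx ν} {A : Ty ν} (t : Tm Γ A) :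
    ∀ {Δ Θ : Ctx ν} (ρ : Ren Γ Δ) (σ : Subst Δ Θ),
      (t.rename ρ).subst σ = t.subst (fun B v => σ B (ρ B v)) := by
  induction t with
  | var v => intros; rfl
  | app f a ihf iha => intros; simp only [Tm.rename, Tm.subst, ihf, iha]
  | lam b ih =>
    intro _ _ ρ σ; simp only [Tm.rename, Tm.subst]; erw [ih]; erw [subst_ext_ren]

theorem ren_subst_ext {ν : Type} {Γ Δ Θ : Ctx ν} (σ : Subst Γ Δ) (ρ : Ren Δ Θ) (A : Ty ν) :
    (fun B v => (Subst.ext σ A B v).rename (ρ.ext A)) =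
      Subst.ext (fun B v => (σ B v).rename ρ) A := by
  funext B v
  cases v with
  | vz => rfl
  | vs w => simp only [Subst.ext]; erw [rename_rename, rename_rename]; rfl

theorem subst_rename {ν : Type} {Γ : Ctx ν} {A : Ty ν} (t : Tm Γ A) :
    ∀ {Δ Θ : Ctx ν} (σ : Subst Γ Δ) (ρ : Ren Δ Θ),
      (t.subst σ).rename ρ = t.subst (fun B v => (σ B v).rename ρ) := by
  induction t with
  | var v => intros; rfl
  | app f a ihf iha => intros; simp only [Tm.rename, Tm.subst, ihf, iha]
  | lam b ih =>
    intro _ _ σ ρ; simp only [Tm.rename, Tm.subst]; erw [ih]; erw [ren_subst_ext]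

theorem subst_ext_comp {ν : Type} {Γ Δ Θ : Ctx ν} (σ : Subst Γ Δ) (τ : Subst Δ Θ) (A : Ty ν) :
    (fun B v => (Subst.ext σ A B v).subst (Subst.ext τ A)) =
      Subst.ext (fun B v => (σ B v).subst τ) A := by
  funext B v
  cases v with
  | vz => rfl
  | vs w => simp only [Subst.ext]; erw [rename_subst, subst_rename]; rfl

theorem subst_subst {ν : Type} {Γ : Ctx ν} {A : Ty ν} (t : Tm Γ A) :
    ∀ {Δ Θ : Ctx ν} (σ : Subst Γ Δ) (τ : Subst Δ Θ),
      (t.subst σ).subst τ = t.subst (fun B v => (σ B v).subst τ) := by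
  induction t with
  | var v => intros; rfl
  | app f a ihf iha => intros; simp only [Tm.subst, ihf, iha]
  | lam b ih =>
    intro _ _ σ ρ; simp only [Tm.subst]; erw [ih]; erw [subst_ext_comp]

theorem subst_id {ν : Type} {Γ : Ctx ν} {A : Ty ν} (t : Tm Γ A) :
    t.subst (fun _ v => .var v) = t := by
  induction t with
  | var v => rfl
  | app f a ihf iha => simp only [Tm.subst, ihf, iha]
  | @lam Γ A B b ih =>
    simp only [Tm.subst]
    have : Subst.ext (fun (_ : Ty ν) (v : Var Γ _) => Tm.var v) A = fun _ v => .var v := by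
      funext B v; cases v <;> rfl
    rw [this, ih]

theorem rename_eq_subst {ν : Type} {Γ Δ : Ctx ν} {A : Ty ν} (t : Tm Γ A) (ρ : Ren Γ Δ) :
    t.rename ρ = t.subst (fun B v => .var (ρ B v)) := by
  conv_lhs => erw [← subst_id t]
  erw [subst_rename]; rfl

theorem wk_subst1 {ν : Type} {Γ : Ctx ν} {A B : Ty ν} (t : Tm Γ A) (s : Tm Γ B) :
    (t.rename (fun _ => Var.vs)).subst1 s = t := by
  unfold Tm.subst1
  erw [rename_subst]
  exact subst_id t

theorem wk_subst_ext {ν : Type} {Γ Δ : Ctx ν} {A B : Ty ν} (t : Tm Γ A) (σ : Subst Γ Δ) :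
    (t.rename (fun _ => Var.vs)).subst (Subst.ext σ B) =
      (t.subst σ).rename (fun _ => Var.vs) := by
  erw [rename_subst, subst_rename]; rfl

theorem subst_ext_subst1 {ν : Type} {Γ Δ : Ctx ν} {A B : Ty ν} (b : Tm (A :: Γ) B)
    (σ : Subst Γ Δ) (s : Tm Δ A) :
    (b.subst (Subst.ext σ A)).subst1 s = b.subst (Subst.cons s σ) := by
  unfold Tm.subst1
  erw [subst_subst]
  congr 1
  funext B v
  cases v with
  | vz => rfl
  | vs w =>
    simp only [Subst.ext, Subst.cons]
    exact wk_subst1 _ _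

theorem eqv_rename {ν : Type} {Γ : Ctx ν} {A : Ty ν} {a b : Tm Γ A} (h : Eqv a b) :
    ∀ {Δ : Ctx ν} (ρ : Ren Γ Δ), Eqv (a.rename ρ) (b.rename ρ) := by
  induction h with
  | refl a => intros; exact .refl _
  | symm _ ih => intro _ ρ; exact .symm (ih ρ)
  | trans _ _ ih1 ih2 => intro _ ρ; exact .trans (ih1 ρ) (ih2 ρ)
  | congApp _ _ ih1 ih2 => intro _ ρ; exact .congApp (ih1 ρ) (ih2 ρ)
  | congLam _ ih => intro _ ρ; exact .congLam (ih _)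
  | beta a b =>
    intro _ ρ
    have : (a.subst1 b).rename ρ = (a.rename (ρ.ext _)).subst1 (b.rename ρ) := by
      unfold Tm.subst1
      erw [subst_rename, rename_subst]
      congr 1
      funext B v; cases v <;> rfl
    rw [this]
    exact .beta _ _
  | eta a =>
    intro _ ρ
    have := Eqv.eta (a.rename ρ)
    simp only [Tm.rename]
    erw [rename_rename] at this ⊢
    exact this

/-! ### Normal forms (η-long) and weak normalization -/

/-- `NN true t`: `t` is neutral; `NN false t`: `t` is η-long β-normal. -/
inductive NN {ν : Type} : Bool → ∀ {Γ : Ctx ν} {A : Ty ν}, Tm Γ A → Prop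
  | var {Γ : Ctx ν} {A : Ty ν} (v : Var Γ A) : NN true (.var v)
  | app {Γ : Ctx ν} {A B : Ty ν} {f : Tm Γ (Ty.arrow A B)} {a : Tm Γ A} :
      NN true f → NN false a → NN true (.app f a)
  | base {Γ : Ctx ν} {x : ν} {a : Tm Γ (Ty.atom x)} : NN true a → NN false a
  | lam {Γ : Ctx ν} {A B : Ty ν} {b : Tm (A :: Γ) B} : NN false b → NN false (.lam b)

theorem NN.rename {ν : Type} {i : Bool} {Γ : Ctx ν} {A : Ty ν} {t : Tm Γ A} (h : NN i t) :
    ∀ {Δ : Ctx ν} (ρ : Ren Γ Δ), NN i (t.rename ρ) := by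
  induction h with
  | var v => intros; exact .var _
  | app _ _ ih1 ih2 => intro _ ρ; exact .app (ih1 ρ) (ih2 ρ)
  | base _ ih => intro _ ρ; exact .base (ih ρ)
  | lam _ ih => intro _ ρ; exact .lam (ih _)

def WN {ν : Type} : (A : Ty ν) → {Γ : Ctx ν} → Tm Γ A → Prop
  | .atom _, _, t => ∃ n, NN false n ∧ Eqv t n
  | .arrow A B, Γ, t => ∀ (Δ : Ctx ν) (ρ : Ren Γ Δ) (a : Tm Δ A),
      WN A a → WN B (.app (t.rename ρ) a)

theorem WN.eqv {ν : Type} {A : Ty ν} : ∀ {Γ : Ctx ν} {t s : Tm Γ A},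
    Eqv t s → WN A s → WN A t := by
  induction A with
  | atom x =>
    rintro Γ t s h ⟨n, hn, h'⟩
    exact ⟨n, hn, h.trans h'⟩
  | arrow A B _ ihB =>
    intro Γ t s h hs Δ ρ a ha
    exact ihB (.congApp (eqv_rename h ρ) (.refl a)) (hs Δ ρ a ha)

theorem WN.rename {ν : Type} {A : Ty ν} {Γ Δ : Ctx ν} {t : Tm Γ A} (h : WN A t)
    (ρ : Ren Γ Δ) : WN A (t.rename ρ) := by
  cases A with
  | atom x =>
    obtain ⟨n, hn, h'⟩ := h
    exact ⟨_, hn.rename ρ, eqv_rename h' ρ⟩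
  | arrow A B =>
    intro Θ ρ' a ha
    erw [rename_rename]
    exact h Θ _ a ha

theorem WN.reify_reflect {ν : Type} (A : Ty ν) :
    (∀ {Γ : Ctx ν} (t : Tm Γ A), WN A t → ∃ n, NN false n ∧ Eqv t n) ∧
    (∀ {Γ : Ctx ν} (t : Tm Γ A), NN true t → WN A t) := by
  induction A with
  | atom x => exact ⟨fun t h => h, fun t h => ⟨t, .base h, .refl t⟩⟩
  | arrow A B ihA ihB =>
    refine ⟨fun {Γ} t h => ?_, fun {Γ} t h => ?_⟩
    · obtain ⟨n, hn, e⟩ := ihB.1 _ (h (A :: Γ) (fun _ => Var.vs) (.var .vz) (ihA.2 _ (.var _)))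
      exact ⟨.lam n, .lam hn, (Eqv.eta t).symm.trans (.congLam e)⟩
    · intro Δ ρ a ha
      obtain ⟨n, hn, e⟩ := ihA.1 a ha
      exact WN.eqv (.congApp (.refl _) e) (ihB.2 _ (.app (h.rename ρ) hn))

theorem WN.fundamental {ν : Type} {Γ : Ctx ν} {A : Ty ν} (t : Tm Γ A) :
    ∀ {Δ : Ctx ν} (σ : Subst Γ Δ), (∀ B v, WN B (σ B v)) → WN A (t.subst σ) := by
  induction t with
  | var v => intro _ σ h; exact h _ v
  | app f a ihf iha =>
    intro Δ σ h
    have := ihf σ h Δ (fun _ v => v) _ (iha σ h)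
    erw [rename_id] at this
    exact this
  | @lam Γ A B b ih =>
    intro Δ σ h Θ ρ a ha
    have e : ((Tm.lam b).subst σ).rename ρ =
        Tm.lam (b.subst (Subst.ext (fun B v => (σ B v).rename ρ) A)) := by
      erw [subst_rename]; rfl
    rw [e]
    refine WN.eqv (.beta _ _) ?_
    erw [subst_ext_subst1]
    apply ih
    intro B v
    cases v with
    | vz => exact ha
    | vs w => exact (h _ w).rename ρ

theorem exists_nf {ν : Type} {Γ : Ctx ν} {A : Ty ν} (t : Tm Γ A) :
    ∃ n, NN false n ∧ Eqv t n := by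
  have := WN.fundamental t (fun _ v => .var v)
    (fun B v => (WN.reify_reflect B).2 _ (.var v))
  erw [subst_id] at this
  exact (WN.reify_reflect A).1 t this

/-! ### Full type structures -/

def Sem {ν : Type} (D : Type) : Ty ν → Type
  | .atom _ => D
  | .arrow A B => Sem D A → Sem D B

abbrev Env {ν : Type} (D : Type) (Γ : Ctx ν) : Type := ∀ A : Ty ν, Var Γ A → Sem D A

def Env.cons {ν : Type} {D : Type} {Γ : Ctx ν} {A : Ty ν} (d : Sem D A) (ρ : Env D Γ) :
    ∀ B : Ty ν, Var (A :: Γ) B → Sem D B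
  | _, .vz => d
  | _, .vs w => ρ _ w

def eval {ν : Type} {D : Type} : ∀ {Γ : Ctx ν} {A : Ty ν}, Tm Γ A → Env D Γ → Sem D A
  | _, _, .var v, ρ => ρ _ v
  | _, _, .app f a, ρ => (eval f ρ) (eval a ρ)
  | _, _, .lam b, ρ => fun d => eval b (Env.cons d ρ)

theorem eval_rename {ν : Type} {D : Type} {Γ : Ctx ν} {A : Ty ν} (t : Tm Γ A) :
    ∀ {Δ : Ctx ν} (r : Ren Γ Δ) (ρ : Env D Δ),
      eval (t.rename r) ρ = eval t (fun B v => ρ B (r B v)) := by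
  induction t with
  | var v => intros; rfl
  | app f a ihf iha => intros; simp only [Tm.rename, eval, ihf, iha]
  | lam b ih =>
    intro _ r ρ
    simp only [Tm.rename, eval]
    funext d
    rw [ih]
    congr 1
    funext B v; cases v <;> rfl

theorem eval_subst {ν : Type} {D : Type} {Γ : Ctx ν} {A : Ty ν} (t : Tm Γ A) :
    ∀ {Δ : Ctx ν} (σ : Subst Γ Δ) (ρ : Env D Δ),
      eval (t.subst σ) ρ = eval t (fun B v => eval (σ B v) ρ) := by
  induction t with
  | var v => intros; rfl
  | app f a ihf iha => intros; simp only [Tm.subst, eval, ihf, iha]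
  | lam b ih =>
    intro _ r ρ
    simp only [Tm.subst, eval]
    funext d
    refine (ih _ _).trans ?_
    congr 1
    funext B v
    cases v with
    | vz => rfl
    | vs w => exact eval_rename _ _ _

theorem eval_eqv {ν : Type} {D : Type} {Γ : Ctx ν} {A : Ty ν} {a b : Tm Γ A} (h : Eqv a b) :
    ∀ ρ : Env D Γ, eval a ρ = eval b ρ := by
  induction h with
  | refl a => intros; rfl
  | symm _ ih => intro ρ; exact (ih ρ).symm
  | trans _ _ ih1 ih2 => intro ρ; exact (ih1 ρ).trans (ih2 ρ)
  | congApp _ _ ih1 ih2 => intro ρ; simp only [eval, ih1, ih2]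
  | congLam _ ih => intro ρ; funext d; exact ih _
  | beta a b =>
    intro ρ
    unfold Tm.subst1
    erw [eval_subst]
    simp only [eval]
    congr 1
    funext B v; cases v <;> rfl
  | eta a =>
    intro ρ
    funext d
    exact congrFun (eval_rename a (fun _ => Var.vs) (Env.cons d ρ)) d

/-! ### Codes and the finite completeness theorem -/

inductive Code (ν : Type) : Type
  | var : ℕ → Code ν
  | app : Code ν → Code ν → Code ν
  | lam : Ty ν → Code ν → Code ν
  | junk : Code ν

def level {ν : Type} : ∀ {Γ : Ctx ν} {A : Ty ν}, Var Γ A → ℕ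
  | _ :: Γ, _, .vz => Γ.length
  | _ :: _, _, .vs v => level v

def code {ν : Type} : ∀ {Γ : Ctx ν} {A : Ty ν}, Tm Γ A → Code ν
  | _, _, .var v => .var (level v)
  | _, _, .app f a => .app (code f) (code a)
  | _, _, @Tm.lam _ _ A _ b => .lam A (code b)

theorem level_lt {ν : Type} {Γ : Ctx ν} {A : Ty ν} (v : Var Γ A) : level v < Γ.length := by
  induction v with
  | vz => simp [level]
  | vs v ih => simp only [level, List.length_cons]; omega

theorem level_inj {ν : Type} {Γ : Ctx ν} {A : Ty ν} (v : Var Γ A) :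
    ∀ {A' : Ty ν} (v' : Var Γ A'), level v = level v' →
      (⟨A, v⟩ : Σ B, Var Γ B) = ⟨A', v'⟩ := by
  induction v with
  | vz =>
    intro A' v' h
    cases v' with
    | vz => rfl
    | vs w => have := level_lt w; simp only [level] at h; omega
  | vs v ih =>
    intro A' v' h
    cases v' with
    | vz => have := level_lt v; simp only [level] at h; omega
    | vs w =>
      simp only [level] at h
      have := ih w h
      cases this
      rfl

theorem code_inj {ν : Type} {Γ : Ctx ν} {A : Ty ν} (t : Tm Γ A) :
    ∀ {A' : Ty ν} (t' : Tm Γ A'), code t = code t' →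
      (⟨A, t⟩ : Σ B, Tm Γ B) = ⟨A', t'⟩ := by
  induction t with
  | var v =>
    intro A' t' h
    cases t' with
    | var w =>
      simp only [code, Code.var.injEq] at h
      cases level_inj v w h
      rfl
    | app _ _ => simp [code] at h
    | lam _ => simp [code] at h
  | app f a ihf iha =>
    intro A' t' h
    cases t' with
    | var w => simp [code] at h
    | app f' a' =>
      simp only [code, Code.app.injEq] at h
      cases ihf f' h.1
      cases iha a' h.2
      rfl
    | lam _ => simp [code] at h
  | lam b ih =>
    intro A' t' h
    cases t' with
    | var w => simp [code] at h
    | app f' a' => simp [code] at h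
    | lam b' =>
      simp only [code, Code.lam.injEq] at h
      obtain ⟨rfl, h⟩ := h
      cases ih b' h
      rfl

section NbE

open Classical in
noncomputable def unclip {ν : Type} {S : Finset (ℕ × Code ν)} (d : Set S) (k : ℕ) : Code ν :=
  if h : ∃ c : Code ν, ∃ m : (k, c) ∈ S, (⟨(k, c), m⟩ : S) ∈ d then h.choose else .junk

def clip {ν : Type} (S : Finset (ℕ × Code ν)) (g : ℕ → Code ν) : Set S :=
  {p | g p.1.1 = p.1.2}

theorem unclip_clip {ν : Type} (S : Finset (ℕ × Code ν)) (g : ℕ → Code ν) (k : ℕ)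
    (h : (k, g k) ∈ S) : unclip (clip S g) k = g k := by
  have hex : ∃ c : Code ν, ∃ m : (k, c) ∈ S, (⟨(k, c), m⟩ : S) ∈ clip S g := ⟨g k, h, rfl⟩
  unfold unclip
  rw [dif_pos hex]
  obtain ⟨_, h2⟩ := hex.choose_spec
  exact h2.symm

noncomputable def rr {ν : Type} (S : Finset (ℕ × Code ν)) :
    (A : Ty ν) → ((ℕ → Code ν) → Sem (Set S) A) × (Sem (Set S) A → ℕ → Code ν)
  | .atom _ => (fun g => clip S g, fun d k => unclip d k)
  | .arrow A B =>
    (fun g d => (rr S B).1 (fun k => .app (g k) ((rr S A).2 d k)),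
     fun f k => .lam A ((rr S B).2 (f ((rr S A).1 (fun _ => .var k))) (k + 1)))

noncomputable def env0 {ν : Type} (S : Finset (ℕ × Code ν)) (Γ : Ctx ν) : Env (Set S) Γ :=
  fun A v => (rr S A).1 (fun _ => .var (level v))

theorem env0_cons {ν : Type} (S : Finset (ℕ × Code ν)) (Γ : Ctx ν) (A : Ty ν) :
    Env.cons ((rr S A).1 (fun _ => .var Γ.length)) (env0 S Γ) = env0 S (A :: Γ) := by
  funext B v; cases v <;> rfl

theorem nbe {ν : Type} {i : Bool} {Γ : Ctx ν} {A : Ty ν} {t : Tm Γ A} (h : NN i t) :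
    ∀ᶠ S : Finset (ℕ × Code ν) in Filter.atTop,
      if i = true then ∃ g, eval t (env0 S Γ) = (rr S A).1 g ∧ g Γ.length = code t
      else (rr S A).2 (eval t (env0 S Γ)) Γ.length = code t := by
  induction h with
  | var v =>
    refine Filter.Eventually.of_forall fun S => ?_
    rw [if_pos rfl]
    exact ⟨_, rfl, rfl⟩
  | app _ _ ih1 ih2 =>
    filter_upwards [ih1, ih2] with S h1 h2
    rw [if_pos rfl] at h1 ⊢
    rw [if_neg (by simp)] at h2
    obtain ⟨g, hg, hg'⟩ := h1
    simp only [eval, hg]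
    exact ⟨_, rfl, by simp only [h2, hg', code]⟩
  | @base Γ x a _ ih =>
    filter_upwards [ih, Filter.eventually_ge_atTop {(Γ.length, code a)}] with S h1 h2
    rw [if_pos rfl] at h1
    rw [if_neg (by simp)]
    obtain ⟨g, hg, hg'⟩ := h1
    rw [hg]
    have := unclip_clip S g Γ.length (by rw [hg']; exact h2 (by simp))
    rw [hg'] at this
    exact this
  | @lam Γ A B b _ ih =>
    filter_upwards [ih] with S h
    rw [if_neg (by simp)] at h ⊢
    simp only [eval, rr, code]
    rw [env0_cons]
    exact congrArg _ h

end NbE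

theorem finite_completeness {ν : Type} {Γ : Ctx ν} {A : Ty ν} (a b : Tm Γ A)
    (hne : ¬ Eqv a b) :
    ∃ (n : ℕ) (D : Type) (_ : D ≃ Fin n) (_ : D), ¬ ∀ ρ : Env D Γ, eval a ρ = eval b ρ := by
  classical
  obtain ⟨a', ha, ea⟩ := exists_nf a
  obtain ⟨b', hb, eb⟩ := exists_nf b
  obtain ⟨S, h1, h2⟩ := ((nbe ha).and (nbe hb)).exists
  rw [if_neg (by simp)] at h1 h2
  refine ⟨Fintype.card (Set S), Set S, Fintype.equivFin _, ∅, fun h => hne ?_⟩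
  have h3 := h (env0 S Γ)
  rw [eval_eqv ea, eval_eqv eb] at h3
  rw [h3, h2] at h1
  cases code_inj _ _ h1
  exact ea.trans eb.symm

/-! ### Representing finite functionals by terms -/

/-- `C → … → C → C` with `n` arguments. -/
def TT {ν : Type} (C : Ty ν) : ℕ → Ty ν
  | 0 => C
  | n + 1 => .arrow C (TT C n)

def appN {ν : Type} {C : Ty ν} {Γ : Ctx ν} : ∀ {n : ℕ}, Tm Γ (TT C n) → (Fin n → Tm Γ C) → Tm Γ C
  | 0, t, _ => t
  | _ + 1, t, xs => appN (.app t (xs 0)) (fun i => xs i.succ)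

theorem appN_congr {ν : Type} {C : Ty ν} {Γ : Ctx ν} {n : ℕ} : ∀ {t s : Tm Γ (TT C n)}
    {xs ys : Fin n → Tm Γ C}, Eqv t s → (∀ i, Eqv (xs i) (ys i)) →
      Eqv (appN t xs) (appN s ys) := by
  induction n with
  | zero => intro t s xs ys h _; exact h
  | succ n ih => intro t s xs ys h h'; exact ih (.congApp h (h' 0)) (fun i => h' i.succ)

theorem appN_step {ν : Type} {C : Ty ν} {Γ : Ctx ν} {n : ℕ} {t : Tm Γ (TT C (n + 1))}
    {xs : Fin (n + 1) → Tm Γ C} {s : Tm Γ (TT C n)}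
    (h : Eqv (Tm.app (A := C) (B := TT C n) t (xs 0)) s) :
    Eqv (appN t xs) (appN s (fun i => xs i.succ)) :=
  appN_congr (n := n) h (fun _ => .refl _)

theorem appN_subst {ν : Type} {C : Ty ν} {Γ Δ : Ctx ν} (σ : Subst Γ Δ) {n : ℕ} :
    ∀ (t : Tm Γ (TT C n)) (xs : Fin n → Tm Γ C),
      (appN t xs).subst σ = appN (t.subst σ) (fun i => (xs i).subst σ) := by
  induction n with
  | zero => intro t xs; rfl
  | succ n ih => intro t xs; simp only [appN, ih]; rfl

def constT {ν : Type} {C : Ty ν} : ∀ (n : ℕ) {Γ : Ctx ν}, Tm Γ C → Tm Γ (TT C n)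
  | 0, _, x => x
  | n + 1, _, x => .lam (constT n (x.rename (fun _ => Var.vs)))

theorem constT_subst {ν : Type} {C : Ty ν} (n : ℕ) : ∀ {Γ Δ : Ctx ν} (σ : Subst Γ Δ) (x : Tm Γ C),
    (constT n x).subst σ = constT n (x.subst σ) := by
  induction n with
  | zero => intros; rfl
  | succ n ih =>
    intro Γ Δ σ x
    simp only [constT, Tm.subst]
    erw [ih, wk_subst_ext]

theorem constT_spec {ν : Type} {C : Ty ν} {Γ : Ctx ν} (n : ℕ) : ∀ (x : Tm Γ C)
    (xs : Fin n → Tm Γ C), Eqv (appN (constT n x) xs) x := by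
  induction n with
  | zero => intros; exact .refl _
  | succ n ih =>
    intro x xs
    refine Eqv.trans (appN_step (Eqv.beta _ _)) ?_
    unfold Tm.subst1
    erw [constT_subst]
    have := wk_subst1 x (xs 0)
    unfold Tm.subst1 at this
    rw [this]
    exact ih _ _

theorem exists_proj {ν : Type} {C : Ty ν} {Γ : Ctx ν} (n : ℕ) : ∀ (i : Fin n),
    ∃ t : Tm Γ (TT C n), ∀ xs : Fin n → Tm Γ C, Eqv (appN t xs) (xs i) := by
  induction n with
  | zero => intro i; exact i.elim0
  | succ n ih =>
    intro i
    refine Fin.cases ?_ (fun j => ?_) i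
    · refine ⟨.lam (constT n (.var .vz)), fun xs => ?_⟩
      refine Eqv.trans (appN_step (Eqv.beta _ _)) ?_
      unfold Tm.subst1
      erw [constT_subst]
      exact constT_spec _ _ _
    · obtain ⟨t, ht⟩ := ih j
      refine ⟨.lam (t.rename (fun _ => Var.vs)), fun xs => ?_⟩
      refine Eqv.trans (appN_step (Eqv.beta _ _)) ?_
      erw [wk_subst1]
      exact ht _

/-- A case operator with values in the type `X`. -/
structure CaseOp {ν : Type} (C : Ty ν) (n : ℕ) (X : Ty ν) where
  K : ∀ {Γ : Ctx ν}, Tm Γ (TT C n) → (Fin n → Tm Γ X) → Tm Γ X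
  comm : ∀ {Γ Δ : Ctx ν} (σ : Subst Γ Δ) (u : Tm Γ (TT C n)) (e : Fin n → Tm Γ X),
    (K u e).subst σ = K (u.subst σ) (fun i => (e i).subst σ)

def CaseOp.base {ν : Type} (C : Ty ν) (n : ℕ) : CaseOp C n C where
  K := fun u e => appN u e
  comm := fun σ u e => appN_subst σ u e

def CaseOp.arrow {ν : Type} {C : Ty ν} {n : ℕ} (A : Ty ν) {B : Ty ν} (k : CaseOp C n B) :
    CaseOp C n (.arrow A B) where
  K := fun u e => .lam (k.K (u.rename (fun _ => Var.vs))
    (fun i => .app ((e i).rename (fun _ => Var.vs)) (.var .vz)))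
  comm := fun σ u e => by
    simp only [Tm.subst]
    erw [k.comm, wk_subst_ext]
    simp only [Tm.subst]
    congr 2
    funext i
    erw [wk_subst_ext]
    rfl

theorem CaseOp.arrow_spec {ν : Type} {C : Ty ν} {n : ℕ} {A B : Ty ν} (k : CaseOp C n B)
    {Γ : Ctx ν} (u : Tm Γ (TT C n)) (e : Fin n → Tm Γ (.arrow A B)) (s : Tm Γ A) :
    Eqv (.app ((k.arrow A).K u e) s) (k.K u (fun i => .app (e i) s)) := by
  refine Eqv.trans (.beta _ _) ?_
  unfold Tm.subst1
  erw [k.comm]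
  have h := fun {X : Ty ν} (t : Tm Γ X) => wk_subst1 t s
  unfold Tm.subst1 at h
  simp only [Tm.subst]
  rw [h]
  simp only [h]
  exact .refl _

def caseT {ν : Type} (C : Ty ν) (n : ℕ) : ∀ m : ℕ, CaseOp C n (TT C m)
  | 0 => CaseOp.base C n
  | m + 1 => (caseT C n m).arrow C

theorem caseT_spec {ν : Type} (C : Ty ν) (n : ℕ) {Γ : Ctx ν} (u : Tm Γ (TT C n)) (m : ℕ) :
    ∀ (e : Fin n → Tm Γ (TT C m)) (xs : Fin m → Tm Γ C),
      Eqv (appN ((caseT C n m).K u e) xs) (appN u (fun i => appN (e i) xs)) := by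
  induction m with
  | zero => intros; exact .refl _
  | succ m ih =>
    intro e xs
    exact Eqv.trans (appN_step (CaseOp.arrow_spec _ _ _ _)) (ih _ _)

def caseA {ν : Type} (C : Ty ν) (n : ℕ) : ∀ A : Ty ν, CaseOp C n (A.substA (fun _ => TT C n))
  | .atom _ => caseT C n n
  | .arrow A B => (caseA C n B).arrow (A.substA (fun _ => TT C n))

/-- The logical relation between terms and functionals. -/
def R {ν : Type} {C : Ty ν} {n : ℕ} {D : Type} (eD : D ≃ Fin n) {Δ : Ctx ν} :
    (A : Ty ν) → Tm Δ (A.substA (fun _ => TT C n)) → Sem D A → Prop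
  | .atom _, t, d => ∀ xs : Fin n → Tm Δ C, Eqv (appN (n := n) t xs) (xs (eD d))
  | .arrow A B, t, f => ∀ (s : Tm Δ (A.substA (fun _ => TT C n))) (d : Sem D A),
      R eD A s d → R eD B (.app t s) (f d)

theorem R.eqv {ν : Type} {C : Ty ν} {n : ℕ} {D : Type} (eD : D ≃ Fin n) {Δ : Ctx ν}
    {A : Ty ν} : ∀ {t s : Tm Δ (A.substA (fun _ => TT C n))} {d : Sem D A}, Eqv t s →
      R eD A s d → R eD A t d := by
  induction A with
  | atom x => intro t s d h hs xs; exact (appN_congr h (fun _ => .refl _)).trans (hs xs)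
  | arrow A B _ ihB => intro t s d h hs u e hu; exact ihB (.congApp h (.refl _)) (hs u e hu)

theorem R.fundamental {ν : Type} {C : Ty ν} {n : ℕ} {D : Type} (eD : D ≃ Fin n) {Δ : Ctx ν}
    {Γ : Ctx ν} {A : Ty ν} (t : Tm Γ A) :
    ∀ (σ : Subst (Γ.map (Ty.substA (fun _ => TT C n))) Δ) (ρ : Env D Γ),
      (∀ B v, R eD B (σ _ (Var.substA (fun _ => TT C n) v)) (ρ B v)) →
      R eD A ((t.substA (fun _ => TT C n)).subst σ) (eval t ρ) := by
  induction t with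
  | var v => intro σ ρ h; exact h _ v
  | app f a ihf iha => intro σ ρ h; exact ihf σ ρ h _ _ (iha σ ρ h)
  | lam b ih =>
    intro σ ρ h s d hs
    refine R.eqv eD (.beta _ _) ?_
    erw [subst_ext_subst1]
    refine ih (Subst.cons s σ) (Env.cons d ρ) ?_
    intro B v
    cases v with
    | vz => exact hs
    | vs w => exact h _ w

theorem R.case {ν : Type} {C : Ty ν} {n : ℕ} {D : Type} (eD : D ≃ Fin n) {Δ : Ctx ν}
    (u : Tm Δ (TT C n)) (p : D) (hu : ∀ xs : Fin n → Tm Δ C, Eqv (appN u xs) (xs (eD p)))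
    (B : Ty ν) : ∀ (e : Fin n → Tm Δ (B.substA (fun _ => TT C n))) (d : Sem D B),
      R eD B (e (eD p)) d → R eD B ((caseA C n B).K u e) d := by
  induction B with
  | atom x =>
    intro e d h xs
    exact ((caseT_spec C n u n e xs).trans (hu _)).trans (h xs)
  | arrow A B _ ihB =>
    intro e f h s d hs
    refine R.eqv eD (CaseOp.arrow_spec _ _ _ _) ?_
    exact ihB _ _ (h s d hs)

def Full {ν : Type} (C : Ty ν) {n : ℕ} {D : Type} (eD : D ≃ Fin n) (Δ : Ctx ν) (A : Ty ν) :
    Prop :=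
  ∀ d : Sem D A, ∃ t : Tm Δ (A.substA (fun _ => TT C n)), R eD A t d

theorem Sem.finite {ν : Type} {n : ℕ} {D : Type} (eD : D ≃ Fin n) (A : Ty ν) :
    Finite (Sem D A) := by
  induction A with
  | atom x => exact Finite.of_equiv _ eD.symm
  | arrow A B ihA ihB => exact (inferInstance : Finite (Sem D A → Sem D B))

def Sem.point {ν : Type} {D : Type} (d0 : D) : ∀ A : Ty ν, Sem D A
  | .atom _ => d0
  | .arrow _ B => fun _ => Sem.point d0 B

theorem full_elim {ν : Type} {C : Ty ν} {n : ℕ} {D : Type} (eD : D ≃ Fin n) (d0 : D) (Δ : Ctx ν)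
    (A : Ty ν) : Full C eD Δ A ∧ ∀ B, Full C eD Δ B → Full C eD Δ (.arrow A B) := by
  classical
  induction A with
  | atom x =>
    refine ⟨fun d => exists_proj n (eD d), fun B hB g => ?_⟩
    choose t ht using hB
    refine ⟨.lam ((caseA C n B).K (.var .vz)
      (fun i => (t (g (eD.symm i))).rename (fun _ => Var.vs))), fun u p hu => ?_⟩
    refine R.eqv eD (.beta _ _) ?_
    unfold Tm.subst1
    erw [(caseA C n B).comm]
    have h := fun {X : Ty ν} (t : Tm Δ X) => wk_subst1 t u
    unfold Tm.subst1 at h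
    simp only [h]
    refine R.case eD u p hu B _ _ ?_
    have e1 : eD.symm (eD p) = p := eD.symm_apply_apply p
    have h2 := ht (g p)
    have e2 : t (g (eD.symm (eD p))) = t (g p) := congrArg (fun q => t (g q)) e1
    exact e2 ▸ h2
  | arrow A₁ A₂ ih₁ ih₂ =>
    refine ⟨ih₁.2 _ ih₂.1, ?_⟩
    have key : ∀ (L : List (Sem D A₁)) (B : Ty ν), Full C eD Δ B →
        ∀ g : (Sem D A₁ → Sem D A₂) → Sem D B,
        (∀ f f' : Sem D A₁ → Sem D A₂, (∀ e ∈ L, f e = f' e) → g f = g f') →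
        ∃ t : Tm Δ ((Ty.arrow (.arrow A₁ A₂) B).substA (fun _ => TT C n)),
          R eD (.arrow (.arrow A₁ A₂) B) t g := by
      intro L
      induction L with
      | nil =>
        intro B hB g hg
        let f0 : Sem D A₁ → Sem D A₂ := fun _ => Sem.point d0 A₂
        obtain ⟨t, ht⟩ := hB (g f0)
        refine ⟨.lam (t.rename (fun _ => Var.vs)), fun u f hu => ?_⟩
        refine R.eqv eD (.beta _ _) ?_
        erw [wk_subst1, hg f f0 (by simp)]
        exact ht
      | cons e L ih =>
        intro B hB g hg
        obtain ⟨G, hG⟩ := ih (.arrow A₂ B) (ih₂.2 B hB)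
          (fun f v => g (Function.update f e v)) (by
            intro f f' hff
            funext v
            apply hg
            intro x hx
            by_cases hxe : x = e
            · subst hxe; simp
            · rw [Function.update_of_ne hxe, Function.update_of_ne hxe]
              exact hff x (by simpa [hxe] using hx))
        obtain ⟨te, hte⟩ := ih₁.1 e
        refine ⟨.lam (.app (.app (G.rename (fun _ => Var.vs)) (.var .vz))
          (.app (.var .vz) (te.rename (fun _ => Var.vs)))), fun u f hu => ?_⟩
        refine R.eqv eD (.beta _ _) ?_
        have h := fun {X : Ty ν} (t : Tm Δ X) => wk_subst1 t u
        have e1 : (Tm.app (.app (G.rename (fun _ => Var.vs)) (.var .vz))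
            (.app (.var .vz) (te.rename (fun _ => Var.vs)))).subst1 u =
            Tm.app (.app G u) (.app u te) := by
          have hG' := h G
          have hte' := h te
          unfold Tm.subst1 at hG' hte' ⊢
          simp only [Tm.subst]
          erw [hG', hte']
          rfl
        have h3 := hG u f hu _ _ (hu te e hte)
        have e2 : g (Function.update f e (f e)) = g f :=
          congrArg g (Function.update_eq_self e f)
        rw [← e2]
        exact e1 ▸ h3
    intro B hB g
    have := Sem.finite eD A₁
    obtain ⟨s, hs⟩ := (Set.finite_univ (α := Sem D A₁)).exists_finset
    exact key s.toList B hB g (fun f f' h => by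
      congr 1; funext x; exact h x (by simp [hs]))

theorem app_cast {ν : Type} {Δ : Ctx ν} {A : Ty ν} (X Y : Ty ν) (e : X = Y)
    (t : Tm Δ (.arrow A X)) (s : Tm Δ A) :
    (e ▸ Tm.app t s : Tm Δ Y) =
      Tm.app ((congrArg (Ty.arrow A) e) ▸ t : Tm Δ (.arrow A Y)) s := by
  subst e; rfl

/-- Böhming out. -/
theorem bohm_out {ν : Type} {C : Ty ν} {n : ℕ} {D : Type} (eD : D ≃ Fin n) (d0 : D) {Δ : Ctx ν}
    (c d : Tm Δ C) (A : Ty ν) :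
    ∀ (t s : Tm Δ (A.substA (fun _ => TT C n))) (x y : Sem D A),
      R eD A t x → R eD A s y → x ≠ y →
      ∃ (Bs : List (Ty ν)) (hs : HList Δ Bs)
        (e : A.substA (fun _ => TT C n) = Ty.arrsR Bs C),
        Eqv (Tm.apps (e ▸ t) hs) c ∧ Eqv (Tm.apps (e ▸ s) hs) d := by
  induction A with
  | atom v =>
    intro t s x y ht hs hxy
    have key : ∀ (m : ℕ) (xs : Fin m → Tm Δ C), ∃ (Bs : List (Ty ν)) (hs : HList Δ Bs)
        (e : TT C m = Ty.arrsR Bs C), ∀ t, Tm.apps (e ▸ t) hs = appN t xs := by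
      intro m
      induction m with
      | zero => intro xs; exact ⟨[], .nil, rfl, fun t => rfl⟩
      | succ m ih =>
        intro xs
        obtain ⟨Bs, hs, e, h⟩ := ih (fun i => xs i.succ)
        refine ⟨C :: Bs, .cons (xs 0) hs, congrArg (Ty.arrow C) e, fun t => ?_⟩
        simp only [appN]
        rw [← h]
        exact congrArg (HList.apps hs) (app_cast _ _ e t (xs 0)).symm
    obtain ⟨Bs, hs', e, h⟩ := key n (fun i => if i = eD x then c else d)
    refine ⟨Bs, hs', e, ?_, ?_⟩
    · have := ht (fun i => if i = eD x then c else d)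
      rw [if_pos rfl] at this
      exact (h t).symm ▸ this
    · have := hs (fun i => if i = eD x then c else d)
      rw [if_neg (fun hh => hxy (eD.injective hh).symm)] at this
      exact (h s).symm ▸ this
  | arrow A B _ ihB =>
    intro t s f g ht hs hfg
    obtain ⟨z, hz⟩ := Function.ne_iff.mp hfg
    obtain ⟨w, hw⟩ := (full_elim (C := C) eD d0 Δ A).1 z
    obtain ⟨Bs, hs', e, h1, h2⟩ := ihB _ _ _ _ (ht w z hw) (hs w z hw) hz
    refine ⟨A.substA (fun _ => TT C n) :: Bs, .cons w hs',
      congrArg (Ty.arrow (A.substA (fun _ => TT C n))) e, ?_⟩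
    refine ⟨?_, ?_⟩
    · refine (congrArg (fun q => Eqv (HList.apps hs' q) c) (app_cast _ _ e t w)).mp h1
    · refine (congrArg (fun q => Eqv (HList.apps hs' q) d) (app_cast _ _ e s w)).mp h2

theorem main_aux {ν : Type} {C : Ty ν} {n : ℕ} {D : Type} (eD : D ≃ Fin n) (d0 : D) {Δ : Ctx ν}
    (c d : Tm Δ C) (Γ : Ctx ν) : ∀ {A : Ty ν} (a b : Tm Γ A),
    (¬ ∀ ρ : Env D Γ, eval a ρ = eval b ρ) →
    ∃ (Bs : List (Ty ν)) (hs : HList Δ Bs)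
      (e : Ty.arrs (Γ.map (Ty.substA (fun _ => TT C n))) (A.substA (fun _ => TT C n)) =
        Ty.arrsR Bs C),
      Eqv (Tm.apps (Tm.wk (e ▸ Tm.lamAll (a.substA (fun _ => TT C n)))) hs) c ∧
      Eqv (Tm.apps (Tm.wk (e ▸ Tm.lamAll (b.substA (fun _ => TT C n)))) hs) d := by
  induction Γ with
  | nil =>
    intro A a b h
    push Not at h
    obtain ⟨ρ, hρ⟩ := h
    have hR : ∀ t : Tm [] A, R eD A (Tm.wk (Δ := Δ) (t.substA (fun _ => TT C n))) (eval t ρ) := by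
      intro t
      unfold Tm.wk
      erw [rename_eq_subst]
      exact R.fundamental eD t _ ρ (fun B v => nomatch v)
    obtain ⟨Bs, hs, e, h1, h2⟩ := bohm_out eD d0 c d A _ _ _ _ (hR a) (hR b) hρ
    refine ⟨Bs, hs, e, ?_⟩
    have hc : ∀ (X Y : Ty ν) (e : X = Y) (t : Tm [] X),
        Tm.wk (Δ := Δ) (e ▸ t) = e ▸ Tm.wk (Δ := Δ) t := by
      intro X Y e t; subst e; rfl
    exact ⟨(congrArg (fun q => Eqv (HList.apps hs q) c) (hc _ _ e _)).mpr h1,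
      (congrArg (fun q => Eqv (HList.apps hs q) d) (hc _ _ e _)).mpr h2⟩
  | cons X Γ ih =>
    intro A a b h
    refine ih (.lam a) (.lam b) (fun h' => h (fun ρ => ?_))
    have := congrFun (h' (fun B v => ρ B (.vs v))) (ρ X .vz)
    simp only [eval] at this
    convert this using 2 <;> (funext B v; cases v <;> rfl)

end Boehm

/--
**Theorem 6.1 (analogue of Böhm's Theorem for the typed lambda calculus Λ).**
If `a` and `b` are of the same type and `a = b` is not provable in Λ, then for every
two terms `c` and `d` of the same type one can construct type-instances `a′` and `b′`
of `a` and `b` respectively, and terms `h₁, …, hₙ` (`n ≥ 0`), and also find variables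
`x₁, …, xₘ` (`m ≥ 0`, here: all the free variables of `a` and `b`, i.e. the context `Γ`),
such that `(λx₁…xₘ.a′)h₁…hₙ = c` and `(λx₁…xₘ.b′)h₁…hₙ = d` are provable in Λ.
-/
theorem boehm_typed_lambda {ν : Type} [Nonempty ν] {Γ : Ctx ν} {A : Ty ν}
    (a b : Tm Γ A) (hne : ¬ Eqv a b) {Δ : Ctx ν} {C : Ty ν} (c d : Tm Δ C) :
    ∃ (σ : ν → Ty ν) (Bs : List (Ty ν)) (hs : HList Δ Bs)
      (e : Ty.arrs (Γ.map (Ty.substA σ)) (A.substA σ) = Ty.arrsR Bs C),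
      Eqv (Tm.apps (Tm.wk (e ▸ Tm.lamAll (a.substA σ))) hs) c ∧
      Eqv (Tm.apps (Tm.wk (e ▸ Tm.lamAll (b.substA σ))) hs) d := by
  obtain ⟨n, D, eD, d0, h⟩ := Boehm.finite_completeness a b hne
  exact ⟨fun _ => Boehm.TT C n, Boehm.main_aux eD d0 c d Γ a b h⟩
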